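/- The preadapted switch distribution is strongly universal: for every stationary ergodic probability measure Q on Ω = {1,...,D}^ℤ, Q-almost surely limsup_{n→∞} (1/n)·(−log P(X_1^n)) ≤ h_Q. -/

import Mathlib

open Filter MeasureTheory
open scoped Topology

/-- Number of occurrences `c(w|z)` of `w` as a substring of `z`. -/
def cnt {D : ℕ} (w z : List (Fin D)) : ℕ :=
  ((List.range (z.length - w.length + 1)).filter
    (fun i => (z.drop i).take w.length = w)).length

/-- Count `c(w | z_1^{m-1})` of `w` in the string `z` with its last symbol removed,
with the convention that counting in a block of length `-1` (i.e. when `z` itself is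
empty) gives `0`. -/
def cntPred {D : ℕ} (w z : List (Fin D)) : ℕ :=
  if z = [] then 0 else cnt w z.dropLast

/-- The prefix `x_1^n` of the one-sided sequence `x` (0-indexed: `x i = x_{i+1}`). -/
def pref {D : ℕ} (x : ℕ → Fin D) (n : ℕ) : List (Fin D) :=
  (List.range n).map x

/-- Adaptive Markov predictor: the natural-number index corresponds to the Markov
order shifted by one, so `Bpred D xs a (k+1) = B(a | xs, k)` and
`Bpred D xs a 0 = B(a | xs, -1) = 1/D`, where
`B(x_{n+1}|x_1^n, k) = (c(x_{n+1-k}^{n+1}|x_1^n) + B(x_{n+1}|x_1^n, k-1)) /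
(c(x_{n+1-k}^{n}|x_1^{n-1}) + 1)`.  Counts of substrings whose indices fall outside
the string are taken to be zero. -/
noncomputable def Bpred (D : ℕ) (xs : List (Fin D)) (a : Fin D) : ℕ → ℝ
  | 0 => 1 / D
  | k + 1 =>
    if k ≤ xs.length then
      ((cnt (xs.drop (xs.length - k) ++ [a]) xs : ℝ) + Bpred D xs a k) /
      ((cntPred (xs.drop (xs.length - k)) xs : ℝ) + 1)
    else Bpred D xs a k

/-- Preadapted Markov predictor with training data `y`: the natural-number index
corresponds to the Markov order shifted by one, so `BpredPre D y xs a (k+1) = B(a|xs,k)`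
and `BpredPre D y xs a 0 = 1/D`, where
`B(x_{n+1}|x_1^n, k) = (c(x_{n+1-k}^{n+1}|y_1^j x_1^n) + B(x_{n+1}|x_1^n, k-1)) /
(c(x_{n+1-k}^{n}|y_1^j x_1^{n-1}) + 1)`: counts are taken in the concatenated string,
and counts of substrings whose indices fall outside the available string are zero. -/
noncomputable def BpredPre (D : ℕ) (y xs : List (Fin D)) (a : Fin D) : ℕ → ℝ
  | 0 => 1 / D
  | k + 1 =>
    if k ≤ xs.length then
      ((cnt (xs.drop (xs.length - k) ++ [a]) (y ++ xs) : ℝ) + BpredPre D y xs a k) /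
      ((cntPred (xs.drop (xs.length - k)) (y ++ xs) : ℝ) + 1)
    else BpredPre D y xs a k

/-- Partial preadapted switch distribution `P(x_1^n, k)` with Markov order `k : ℤ`. -/
noncomputable def PpartPre (D : ℕ) (p : ℕ → ℝ) (y : List (Fin D)) (x : ℕ → Fin D) :
    ℕ → ℤ → ℝ
  | 0, _ => 0
  | 1, k =>
    if k = -1 then p 0 * BpredPre D y [] (x 0) 0
    else if k = 0 then (1 - p 0) * BpredPre D y [] (x 0) 1
    else 0
  | n + 2, k =>
    if -1 ≤ k ∧ k ≤ (n : ℤ) + 1 then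
      (p (n + 1) * PpartPre D p y x (n + 1) k +
        (1 - p (n + 1)) * PpartPre D p y x (n + 1) (k - 1)) *
        BpredPre D y (pref x (n + 1)) (x (n + 1)) (k + 1).toNat
    else 0

/-- The preadapted switch distribution `P(x_1^n) = Σ_{k=-1}^{n-1} P(x_1^n, k)`. -/
noncomputable def swPre (D : ℕ) (p : ℕ → ℝ) (y : List (Fin D)) (x : ℕ → Fin D) (n : ℕ) : ℝ :=
  ∑ kk ∈ Finset.range (n + 1), PpartPre D p y x n ((kk : ℤ) - 1)

/-- The two-sided sequence space `Ω = {1,...,D}^ℤ` with the product σ-algebra. -/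
abbrev Omega (D : ℕ) := ℤ → Fin D

/-- The shift `T : Ω → Ω`. -/
def shiftT (D : ℕ) : Omega D → Omega D := fun ω i => ω (i + 1)

/-- The cylinder set `{X_1 = x 0, ..., X_n = x (n-1)}`. -/
def cylSet (D : ℕ) (x : ℕ → Fin D) (n : ℕ) : Set (Omega D) :=
  {ω | ∀ i < n, ω ((i : ℤ) + 1) = x i}

/-- The one-sided sample path `X_1, X_2, ...` of `ω` (0-indexed). -/
def path (D : ℕ) (ω : Omega D) : ℕ → Fin D := fun i => ω ((i : ℤ) + 1)

/-- The cylinder probability `Q(x_1^n)`. -/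
noncomputable def Qstr (D : ℕ) (Q : Measure (Omega D)) (x : ℕ → Fin D) (n : ℕ) : ℝ :=
  (Q (cylSet D x n)).toReal

/-!
Fix an order `k`. The switch distribution dominates the weight of the strategy that reaches order
`k` and then stays there, and since the logarithms of the `p n` are negligible on average, staying
costs only a subexponential factor. By the ergodic theorem the order-`k` predictor is
asymptotically at least the conditional probability `Q(X_{n+1} | X_{n-k+1}^n)`, uniformly over the
finitely many words of length `k + 1`, and averaging the logarithm of the latter along the path
gives the rate `H_{k+1} - H_k`, where `H_k` is the entropy of a block of length `k`. These
increments cannot all exceed a number larger than `h_Q = lim H_n / n`.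

The ergodic theorem is proved by Garsia's argument: if `∫ g < 0`, then the Birkhoff sums of `g`
are almost surely bounded above.
-/

section MaximalSums

variable {α : Type*} {T : α → α} {g : α → ℝ}

lemma partialSups_birkhoffSum_succ (n : ℕ) (x : α) :
    partialSups (birkhoffSum T g) (n + 1) x =
      max 0 (g x + partialSups (birkhoffSum T g) n (T x)) := by
  induction n with
  | zero => rw [partialSups_add_one]; simp
  | succ n ih =>
    rw [partialSups_add_one, Pi.sup_apply, ih, birkhoffSum_succ', partialSups_add_one,
      Pi.sup_apply, ← max_add_add_left, max_assoc]

lemma bddAbove_birkhoffSum_apply_iff (x : α) :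
    BddAbove (Set.range fun n => birkhoffSum T g n (T x)) ↔
      BddAbove (Set.range fun n => birkhoffSum T g n x) := by
  have hshift (n : ℕ) : birkhoffSum T g (n + 1) x = g x + birkhoffSum T g n (T x) :=
    birkhoffSum_succ' T g n x
  simp only [bddAbove_def, Set.forall_mem_range]
  constructor
  · rintro ⟨B, hB⟩
    refine ⟨max 0 (g x + B), fun n => ?_⟩
    cases n with
    | zero => simp
    | succ n => exact le_max_of_le_right (by linarith [hshift n, hB n])
  · rintro ⟨B, hB⟩
    exact ⟨B - g x, fun n => by linarith [hshift n, hB (n + 1)]⟩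

end MaximalSums

section PointwiseErgodicTheorem

variable {α : Type*} [MeasurableSpace α] {μ : Measure α} {T : α → α} {g : α → ℝ}

lemma measurable_birkhoffSum (hT : Measurable T) (hg : Measurable g) (n : ℕ) :
    Measurable (birkhoffSum T g n) :=
  Finset.measurable_fun_sum _ fun i _ => hg.comp (hT.iterate i)

lemma nullMeasurableSet_bddAbove_birkhoffSum (hT : Measure.QuasiMeasurePreserving T μ μ)
    (hg : AEMeasurable g μ) :
    NullMeasurableSet {x | BddAbove (Set.range fun n => birkhoffSum T g n x)} μ := by
  refine ⟨_, measurableSet_bddAbove_range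
    (measurable_birkhoffSum hT.measurable hg.measurable_mk), ?_⟩
  filter_upwards [ae_all_iff.2 (hT.birkhoffSum_ae_eq_of_ae_eq hg.ae_eq_mk)] with x hx
  exact congrArg (fun s : ℕ → ℝ => BddAbove (Set.range s)) (funext hx)

lemma integrable_birkhoffSum (hT : MeasurePreserving T μ μ) (hg : Integrable g μ) (n : ℕ) :
    Integrable (birkhoffSum T g n) μ :=
  integrable_finsetSum _ fun i _ => (hT.iterate i).integrable_comp_of_integrable hg

lemma integrable_partialSups_birkhoffSum (hT : MeasurePreserving T μ μ) (hg : Integrable g μ)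
    (n : ℕ) : Integrable (partialSups (birkhoffSum T g) n) μ := by
  induction n with
  | zero => simp
  | succ n ih => simpa only [partialSups_add_one] using ih.sup (integrable_birkhoffSum hT hg _)

/-- With `Mₙ` the maximum of the first `n` Birkhoff sums, the integrand is
`Mₙ₊₁ - Mₙ ∘ T`, whose integral equals that of `Mₙ₊₁ - Mₙ ≥ 0`. -/
lemma integral_max_neg_partialSups_birkhoffSum_nonneg (hT : MeasurePreserving T μ μ)
    (hg : Integrable g μ) (n : ℕ) :
    0 ≤ ∫ x, max (-partialSups (birkhoffSum T g) n (T x)) (g x) ∂μ := by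
  set M := partialSups (birkhoffSum T g)
  have hM (m : ℕ) : Integrable (M m) μ := integrable_partialSups_birkhoffSum hT hg m
  have hMT : Integrable (fun x => M n (T x)) μ := hT.integrable_comp_of_integrable (hM n)
  have integral_comp : ∫ x, M n (T x) ∂μ = ∫ x, M n x ∂μ := by
    rw [← integral_map hT.aemeasurable (by rw [hT.map_eq]; exact (hM n).1), hT.map_eq]
  calc 0 ≤ ∫ x, M (n + 1) x ∂μ - ∫ x, M n x ∂μ :=
        sub_nonneg.2 (integral_mono (hM n) (hM (n + 1)) (M.monotone n.le_succ))
    _ = ∫ x, (M (n + 1) x - M n (T x)) ∂μ := by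
        rw [integral_sub (hM (n + 1)) hMT, integral_comp]
    _ = ∫ x, max (-M n (T x)) (g x) ∂μ := by
        congr 1 with x
        rw [partialSups_birkhoffSum_succ, ← max_sub_sub_right, zero_sub, add_sub_cancel_right]

lemma integral_nonneg_of_ae_not_bddAbove_birkhoffSum (hT : MeasurePreserving T μ μ)
    (hg : Integrable g μ)
    (hunbdd : ∀ᵐ x ∂μ, ¬ BddAbove (Set.range fun n => birkhoffSum T g n x)) :
    0 ≤ ∫ x, g x ∂μ := by
  set M := partialSups (birkhoffSum T g)
  have hM_nonneg (n : ℕ) (x : α) : 0 ≤ M n x := by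
    simpa using le_partialSups_of_le (birkhoffSum T g) n.zero_le x
  have hM_atTop : ∀ᵐ x ∂μ, Tendsto (fun n => M n (T x)) atTop atTop := by
    filter_upwards [hT.quasiMeasurePreserving.ae hunbdd] with x hx
    refine tendsto_atTop_atTop_of_monotone' (fun m n hmn => M.monotone hmn (T x)) ?_
    simpa only [M, Pi.partialSups_apply, bddAbove_range_partialSups] using hx
  refine ge_of_tendsto' (tendsto_integral_of_dominated_convergence (fun x => |g x|)
    (fun n => ?_) hg.abs (fun n => ae_of_all _ fun x => ?_) ?_)
    (integral_max_neg_partialSups_birkhoffSum_nonneg hT hg)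
  · exact ((hT.integrable_comp_of_integrable
      (integrable_partialSups_birkhoffSum hT hg n)).neg.sup hg).aestronglyMeasurable
  · rw [Real.norm_eq_abs, abs_le]
    exact ⟨(neg_abs_le _).trans (le_max_right _ _),
      max_le (by linarith [hM_nonneg n (T x), abs_nonneg (g x)]) (le_abs_self _)⟩
  · filter_upwards [hM_atTop] with x hx
    refine tendsto_const_nhds.congr' ?_
    filter_upwards [hx.eventually_ge_atTop (-g x)] with n hn
    rw [max_eq_right (by linarith)]

lemma ae_bddAbove_birkhoffSum_of_integral_neg (hT : Ergodic T μ) (hg : Integrable g μ)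
    (hneg : ∫ x, g x ∂μ < 0) :
    ∀ᵐ x ∂μ, BddAbove (Set.range fun n => birkhoffSum T g n x) :=
  (hT.quasiErgodic.ae_mem_or_ae_notMem₀
    (nullMeasurableSet_bddAbove_birkhoffSum hT.quasiErgodic.toQuasiMeasurePreserving
      hg.aemeasurable)
    (ae_of_all _ fun x => propext (bddAbove_birkhoffSum_apply_iff x))).resolve_right
    fun h => hneg.not_ge
      (integral_nonneg_of_ae_not_bddAbove_birkhoffSum hT.toMeasurePreserving hg h)

variable [IsProbabilityMeasure μ]

lemma ae_eventually_birkhoffAverage_lt (hT : Ergodic T μ) (hg : Integrable g μ) {c : ℝ}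
    (hc : ∫ x, g x ∂μ < c) :
    ∀ᵐ x ∂μ, ∀ᶠ n in atTop, birkhoffAverage ℝ T g n x < c := by
  obtain ⟨d, hgd, hdc⟩ := exists_between hc
  have hneg : ∫ x, (g x - d) ∂μ < 0 := by
    rw [integral_sub hg (integrable_const d)]
    simpa using hgd
  filter_upwards [ae_bddAbove_birkhoffSum_of_integral_neg hT (hg.sub (integrable_const d)) hneg]
    with x ⟨B, hB⟩
  have hBdiv : Tendsto (fun n : ℕ => B / n) atTop (𝓝 0) := tendsto_const_div_atTop_nhds_zero_nat B
  filter_upwards [hBdiv.eventually_lt_const (sub_pos.2 hdc), eventually_gt_atTop 0] with n hn hn0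
  have hsum : birkhoffSum T g n x - n * d ≤ B := by
    simpa [birkhoffSum] using hB ⟨n, rfl⟩
  have hn0' : (0 : ℝ) < n := Nat.cast_pos.2 hn0
  rw [birkhoffAverage, smul_eq_mul, inv_mul_lt_iff₀ hn0']
  rw [div_lt_iff₀ hn0'] at hn
  linarith

theorem ae_tendsto_birkhoffAverage (hT : Ergodic T μ) (hg : Integrable g μ) :
    ∀ᵐ x ∂μ, Tendsto (fun n => birkhoffAverage ℝ T g n x) atTop (𝓝 (∫ x, g x ∂μ)) := by
  have upper (f : α → ℝ) (hf : Integrable f μ) : ∀ᵐ x ∂μ, ∀ b > ∫ x, f x ∂μ,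
      ∀ᶠ n in atTop, birkhoffAverage ℝ T f n x < b := by
    have hrat : ∀ᵐ x ∂μ, ∀ q : ℚ, ∫ x, f x ∂μ < q →
        ∀ᶠ n in atTop, birkhoffAverage ℝ T f n x < q :=
      ae_all_iff.2 fun q => eventually_imp_distrib_left.2 (ae_eventually_birkhoffAverage_lt hT hf)
    filter_upwards [hrat] with x hx b hb
    obtain ⟨q, hfq, hqb⟩ := exists_rat_btwn hb
    filter_upwards [hx q hfq] with n hn using hn.trans hqb
  filter_upwards [upper g hg, upper (-g) hg.neg] with x hupper hlower
  refine tendsto_order.2 ⟨fun a ha => ?_, hupper⟩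
  filter_upwards [hlower (-a) (by rw [integral_neg']; exact neg_lt_neg ha)] with n hn
  rw [birkhoffAverage_neg] at hn
  exact neg_lt_neg_iff.1 hn

end PointwiseErgodicTheorem

section LinearGrowth

lemma tendsto_comp_sub_div_of_tendsto_div {u : ℕ → ℝ} {h : ℝ}
    (hu : Tendsto (fun n : ℕ => u n / n) atTop (𝓝 h)) (k : ℕ) :
    Tendsto (fun n : ℕ => u (n - k) / n) atTop (𝓝 h) := by
  have hmul := (hu.comp (tendsto_sub_atTop_nat k)).mul
    (tendsto_const_nhds (x := (1 : ℝ)) |>.sub (tendsto_const_div_atTop_nhds_zero_nat (k : ℝ)))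
  rw [sub_zero, mul_one] at hmul
  refine hmul.congr' ?_
  filter_upwards [eventually_gt_atTop k] with n hn
  have hn0 : (n : ℝ) ≠ 0 := Nat.cast_ne_zero.2 (by omega)
  have hnk : ((n - k : ℕ) : ℝ) ≠ 0 := Nat.cast_ne_zero.2 (by omega)
  rw [Function.comp_apply, one_sub_div hn0, ← Nat.cast_sub hn.le, div_mul_div_cancel₀ hnk]

lemma eventually_div_lt_of_sub_le_sub {a c : ℕ → ℝ} {l b : ℝ}
    (hstep : ∀ᶠ n in atTop, a (n + 1) - a n ≤ c (n + 1) - c n)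
    (hc : Tendsto (fun n : ℕ => c n / n) atTop (𝓝 l)) (hlb : l < b) :
    ∀ᶠ n : ℕ in atTop, a n / n < b := by
  obtain ⟨N, hN⟩ := eventually_atTop.1 hstep
  have hanti : AntitoneOn (fun n => a n - c n) (Set.Ici N) :=
    antitoneOn_of_add_one_le Set.ordConnected_Ici fun n _ hn _ => by linarith [hN n hn]
  have hlim : Tendsto (fun n : ℕ => (a N - c N) / n + c n / n) atTop (𝓝 (0 + l)) :=
    (tendsto_const_div_atTop_nhds_zero_nat _).add hc
  rw [zero_add] at hlim
  filter_upwards [hlim.eventually_lt_const hlb, eventually_ge_atTop N] with n hn hNn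
  refine lt_of_le_of_lt ?_ hn
  rw [← add_div]
  have := hanti Set.self_mem_Ici hNn hNn
  gcongr
  linarith

lemma exists_sub_lt_of_tendsto_div {u : ℕ → ℝ} {h b : ℝ}
    (hu : Tendsto (fun n : ℕ => u n / n) atTop (𝓝 h)) (hb : h < b) :
    ∃ k, u (k + 1) - u k < b := by
  by_contra! hge
  have hstep (n : ℕ) : ((n + 1 : ℕ) : ℝ) * b - n * b ≤ u (n + 1) - u n := by
    push_cast
    linarith [hge n]
  obtain ⟨n, hlt, hn⟩ := ((eventually_div_lt_of_sub_le_sub (a := fun n => n * b)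
    (Eventually.of_forall hstep) hu hb).and (eventually_ne_atTop 0)).exists
  rw [mul_div_cancel_left₀ b (Nat.cast_ne_zero.2 hn)] at hlt
  exact hlt.false

lemma tendsto_sum_log_div_of_tendsto_prod {p : ℕ → ℝ} {L : ℝ} (hp : ∀ n, p n ≠ 0) (hL : L ≠ 0)
    (hprod : Tendsto (fun n => ∏ i ∈ Finset.range n, p i) atTop (𝓝 L)) :
    Tendsto (fun n : ℕ => (∑ i ∈ Finset.range n, Real.log (p i)) / n) atTop (𝓝 0) := by
  simp only [← Real.log_prod fun i _ => hp i]
  exact (hprod.log hL).div_atTop tendsto_natCast_atTop_atTop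

end LinearGrowth

section Counting

variable {D : ℕ}

/-- The block `x_{i+1}^{i+k}` of length `k` following the first `i` symbols of `x`. -/
def block (x : ℕ → Fin D) (i k : ℕ) : List (Fin D) :=
  pref (fun j => x (i + j)) k

/-- The number of starting positions `i < n` at which `w` occurs in the infinite sequence `x`;
such an occurrence may extend beyond `x_1^n`. -/
def occCount (w : List (Fin D)) (x : ℕ → Fin D) (n : ℕ) : ℕ :=
  Nat.count (fun i => block x i w.length = w) n

lemma length_pref (x : ℕ → Fin D) (n : ℕ) : (pref x n).length = n := by
  simp [pref]

lemma length_block (x : ℕ → Fin D) (i k : ℕ) : (block x i k).length = k :=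
  length_pref _ k

lemma block_succ (x : ℕ → Fin D) (i k : ℕ) : block x i (k + 1) = block x i k ++ [x (i + k)] := by
  simp [block, pref, List.range_succ]

lemma drop_pref (x : ℕ → Fin D) (n i : ℕ) : (pref x n).drop i = block x i (n - i) :=
  List.ext_getElem (by simp [block, pref]) (by simp [block, pref])

lemma prefix_block_iff {w : List (Fin D)} {x : ℕ → Fin D} {i m : ℕ} :
    w <+: block x i m ↔ w.length ≤ m ∧ block x i w.length = w := by
  have take_block : (block x i m).take w.length = block x i (min w.length m) := by
    simp [block, pref, ← List.map_take, List.take_range]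
  constructor
  · intro h
    have hle : w.length ≤ m := by simpa only [length_block] using h.length_le
    rw [List.prefix_iff_eq_take, take_block, min_eq_left hle] at h
    exact ⟨hle, h.symm⟩
  · rintro ⟨hle, h⟩
    rw [List.prefix_iff_eq_take, take_block, min_eq_left hle, h]

lemma cnt_eq_count (w z : List (Fin D)) :
    cnt w z = Nat.count (fun i => w <+: z.drop i) (z.length - w.length + 1) := by
  simp only [cnt, Nat.count, List.prefix_iff_eq_take, List.countP_eq_length_filter, eq_comm]

lemma occCount_le_cnt (y : List (Fin D)) {w : List (Fin D)} (x : ℕ → Fin D) {n : ℕ}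
    (hw : w.length ≤ n) : occCount w x (n + 1 - w.length) ≤ cnt w (y ++ pref x n) := by
  have hlen : (y ++ pref x n).length - w.length + 1 = y.length + (n + 1 - w.length) := by
    rw [List.length_append, length_pref]
    omega
  rw [cnt_eq_count, hlen, Nat.count_add]
  refine le_add_left (Nat.count_mono_left fun i hi hocc => ?_)
  rw [List.drop_length_add_append, drop_pref, prefix_block_iff]
  exact ⟨by omega, hocc⟩

lemma cntPred_le_occCount (y w : List (Fin D)) (x : ℕ → Fin D) (n : ℕ) :
    cntPred w (y ++ pref x n) ≤ y.length + occCount w x n := by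
  unfold cntPred
  split_ifs with hz
  · exact Nat.zero_le _
  set z := y ++ pref x n with hz_def
  have hlen : z.dropLast.length - w.length + 1 ≤ y.length + n := by
    have hz_pos := List.length_pos_iff.2 hz
    have hz_len : z.length = y.length + n := by rw [hz_def, List.length_append, length_pref]
    rw [List.length_dropLast]
    omega
  calc cnt w z.dropLast
      ≤ Nat.count (fun i => w <+: z.drop i) (z.dropLast.length - w.length + 1) := by
        rw [cnt_eq_count]
        exact Nat.count_mono_left fun i _ hi => hi.trans ((List.dropLast_prefix z).drop i)
    _ ≤ Nat.count (fun i => w <+: z.drop i) (y.length + n) := Nat.count_monotone _ hlen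
    _ ≤ y.length + occCount w x n := by
        rw [Nat.count_add]
        refine add_le_add (Nat.count_le _) (Nat.count_mono_left fun i _ hi => ?_)
        rw [hz_def, List.drop_length_add_append, drop_pref] at hi
        exact (prefix_block_iff.1 hi).2

lemma cnt_append_singleton_le_cntPred (w z : List (Fin D)) (a : Fin D) :
    cnt (w ++ [a]) z ≤ cntPred w z := by
  unfold cntPred
  split_ifs with hz
  · simp [hz, cnt]
  have hlen : z.length - (w ++ [a]).length + 1 = z.dropLast.length - w.length + 1 := by
    rw [List.length_append, List.length_dropLast, List.length_singleton]
    omega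
  rw [cnt_eq_count, cnt_eq_count, hlen]
  refine Nat.count_mono_left fun i _ ⟨t, ht⟩ => ?_
  rw [← List.dropLast_drop_eq_drop_dropLast, ← ht, List.append_assoc,
    List.dropLast_append_of_ne_nil (by simp)]
  exact List.prefix_append _ _

end Counting

section MarkovPredictor

variable {D : ℕ} (y : List (Fin D))

lemma BpredPre_pos (xs : List (Fin D)) (a : Fin D) (k : ℕ) : 0 < BpredPre D y xs a k := by
  induction k with
  | zero => exact one_div_pos.2 (Nat.cast_pos.2 a.pos)
  | succ k ih =>
    rw [BpredPre]
    split_ifs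
    · positivity
    · exact ih

lemma BpredPre_le_one (xs : List (Fin D)) (a : Fin D) (k : ℕ) : BpredPre D y xs a k ≤ 1 := by
  induction k with
  | zero => exact div_le_one_of_le₀ (Nat.one_le_cast.2 a.pos) (Nat.cast_nonneg D)
  | succ k ih =>
    rw [BpredPre]
    split_ifs
    · refine div_le_one_of_le₀ ?_ (by positivity)
      gcongr
      exact cnt_append_singleton_le_cntPred _ _ a
    · exact ih

lemma occCount_div_le_BpredPre (x : ℕ → Fin D) {n k : ℕ} (hk : k < n) :
    (occCount (block x (n - k) (k + 1)) x (n - k) : ℝ) /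
        (occCount (block x (n - k) k) x n + (y.length + 1)) ≤
      BpredPre D y (pref x n) (x n) (k + 1) := by
  have hcontext : (pref x n).drop (n - k) = block x (n - k) k := by
    rw [drop_pref, Nat.sub_sub_self hk.le]
  have hextended : block x (n - k) k ++ [x n] = block x (n - k) (k + 1) := by
    rw [block_succ, Nat.sub_add_cancel hk.le]
  have hnum := occCount_le_cnt y (w := block x (n - k) (k + 1)) x (n := n)
    (by rwa [length_block])
  rw [length_block, Nat.add_sub_add_right] at hnum
  have hden : (cntPred (block x (n - k) k) (y ++ pref x n) : ℝ) ≤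
      y.length + occCount (block x (n - k) k) x n := mod_cast cntPred_le_occCount y _ x n
  have hB_nonneg := (BpredPre_pos y (pref x n) (x n) k).le
  rw [BpredPre, length_pref, if_pos hk.le, hcontext, hextended]
  exact div_le_div₀ (by positivity)
    ((Nat.cast_le.2 hnum).trans (le_add_of_nonneg_right hB_nonneg)) (by positivity) (by linarith)

end MarkovPredictor

section SwitchDistribution

variable {D : ℕ} {p : ℕ → ℝ} (y : List (Fin D)) (x : ℕ → Fin D)

lemma PpartPre_eq_zero_of_lt (p : ℕ → ℝ) (n : ℕ) {k : ℤ} (hk : k < -1) :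
    PpartPre D p y x n k = 0 := by
  match n with
  | 0 => rfl
  | 1 => rw [PpartPre, if_neg (by omega), if_neg (by omega)]
  | n + 2 => rw [PpartPre, if_neg (by omega)]

lemma PpartPre_eq_zero_of_ge (p : ℕ → ℝ) {n : ℕ} {k : ℤ} (hk : (n : ℤ) ≤ k) :
    PpartPre D p y x n k = 0 := by
  match n with
  | 0 => rfl
  | 1 => rw [PpartPre, if_neg (by omega), if_neg (by omega)]
  | n + 2 => rw [PpartPre, if_neg (by omega)]

lemma PpartPre_nonneg (hp : ∀ n, p n ∈ Set.Icc (0 : ℝ) 1) (n : ℕ) (k : ℤ) :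
    0 ≤ PpartPre D p y x n k := by
  have hB (xs : List (Fin D)) (a : Fin D) (m : ℕ) : 0 ≤ BpredPre D y xs a m :=
    (BpredPre_pos y xs a m).le
  have hp0 (m : ℕ) : 0 ≤ p m := (hp m).1
  have hq0 (m : ℕ) : 0 ≤ 1 - p m := sub_nonneg.2 (hp m).2
  induction n using Nat.twoStepInduction generalizing k with
  | zero => exact le_rfl
  | one =>
    rw [PpartPre]
    split_ifs
    · exact mul_nonneg (hp0 0) (hB ..)
    · exact mul_nonneg (hq0 0) (hB ..)
    · exact le_rfl
  | more n _ ih =>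
    rw [PpartPre]
    split_ifs
    · exact mul_nonneg (add_nonneg (mul_nonneg (hp0 _) (ih _)) (mul_nonneg (hq0 _) (ih _)))
        (hB ..)
    · exact le_rfl

lemma mul_PpartPre_mul_BpredPre_le (hp : ∀ n, p n ∈ Set.Icc (0 : ℝ) 1) {n k : ℕ} (hk : k < n) :
    p n * PpartPre D p y x n k * BpredPre D y (pref x n) (x n) (k + 1) ≤
      PpartPre D p y x (n + 1) k := by
  obtain ⟨m, rfl⟩ : ∃ m, n = m + 1 := Nat.exists_eq_add_one.2 (by omega)
  rw [PpartPre, if_pos (by omega), Int.toNat_natCast_add_one]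
  exact mul_le_mul_of_nonneg_right
    (le_add_of_nonneg_right (mul_nonneg (sub_nonneg.2 (hp _).2) (PpartPre_nonneg y x hp _ _)))
    (BpredPre_pos y _ _ _).le

lemma PpartPre_diagonal_pos (hp : ∀ n, p n ∈ Set.Ico (0 : ℝ) 1) (k : ℕ) :
    0 < PpartPre D p y x (k + 1) k := by
  have hq_pos (m : ℕ) : 0 < 1 - p m := sub_pos.2 (hp m).2
  induction k with
  | zero =>
    rw [PpartPre, if_neg (by omega), if_pos Nat.cast_zero]
    exact mul_pos (hq_pos 0) (BpredPre_pos y _ _ _)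
  | succ k ih =>
    have hstay : 0 ≤ p (k + 1) * PpartPre D p y x (k + 1) (k + 1 : ℕ) :=
      mul_nonneg (hp _).1 (PpartPre_nonneg y x (fun n => Set.Ico_subset_Icc_self (hp n)) _ _)
    have hswitch : 0 < (1 - p (k + 1)) * PpartPre D p y x (k + 1) ((k + 1 : ℕ) - 1) := by
      rw [Nat.cast_add_one, add_sub_cancel_right]
      exact mul_pos (hq_pos _) ih
    rw [PpartPre, if_pos (by omega)]
    exact mul_pos (add_pos_of_nonneg_of_pos hstay hswitch) (BpredPre_pos y _ _ _)

lemma PpartPre_pos (hp : ∀ n, p n ∈ Set.Ioo (0 : ℝ) 1) {n k : ℕ} (hk : k < n) :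
    0 < PpartPre D p y x n k := by
  induction n, hk using Nat.le_induction with
  | base => exact PpartPre_diagonal_pos y x (fun n => Set.Ioo_subset_Ico_self (hp n)) k
  | succ n hn ih =>
    exact (mul_pos (mul_pos (hp n).1 ih) (BpredPre_pos y _ _ _)).trans_le
      (mul_PpartPre_mul_BpredPre_le y x (fun n => Set.Ioo_subset_Icc_self (hp n)) hn)

lemma PpartPre_le_swPre (hp : ∀ n, p n ∈ Set.Icc (0 : ℝ) 1) {n k : ℕ} (hk : k < n) :
    PpartPre D p y x n k ≤ swPre D p y x n := by
  have h := Finset.single_le_sum (f := fun j : ℕ => PpartPre D p y x n ((j : ℤ) - 1))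
    (fun j _ => PpartPre_nonneg y x hp n _) (Finset.mem_range.2 (Nat.succ_lt_succ hk))
  simpa [swPre] using h

lemma swPre_pos (hp : ∀ n, p n ∈ Set.Ioo (0 : ℝ) 1) {n : ℕ} (hn : 0 < n) :
    0 < swPre D p y x n :=
  (PpartPre_pos y x hp hn).trans_le
    (PpartPre_le_swPre y x (fun n => Set.Ioo_subset_Icc_self (hp n)) hn)

lemma swPre_one_le_one (hp : p 0 ∈ Set.Icc (0 : ℝ) 1) : swPre D p y x 1 ≤ 1 := by
  have hB (m : ℕ) : BpredPre D y [] (x 0) m ≤ 1 := BpredPre_le_one y [] (x 0) m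
  have hq0 : 0 ≤ 1 - p 0 := sub_nonneg.2 hp.2
  calc swPre D p y x 1
      = p 0 * BpredPre D y [] (x 0) 0 + (1 - p 0) * BpredPre D y [] (x 0) 1 := by
        simp [swPre, PpartPre, Finset.sum_range_succ]
    _ ≤ p 0 * 1 + (1 - p 0) * 1 :=
        add_le_add (mul_le_mul_of_nonneg_left (hB 0) hp.1) (mul_le_mul_of_nonneg_left (hB 1) hq0)
    _ = 1 := by ring

lemma swPre_succ_le (hp : ∀ n, p n ∈ Set.Icc (0 : ℝ) 1) (n : ℕ) :
    swPre D p y x (n + 2) ≤ swPre D p y x (n + 1) := by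
  set P : ℤ → ℝ := PpartPre D p y x (n + 1) with hP
  have hP_nonneg (k : ℤ) : 0 ≤ P k := PpartPre_nonneg y x hp _ k
  have hterm (k : ℤ) : PpartPre D p y x (n + 2) k ≤
      p (n + 1) * P k + (1 - p (n + 1)) * P (k - 1) := by
    have hmix : 0 ≤ p (n + 1) * P k + (1 - p (n + 1)) * P (k - 1) :=
      add_nonneg (mul_nonneg (hp _).1 (hP_nonneg k))
        (mul_nonneg (sub_nonneg.2 (hp _).2) (hP_nonneg _))
    rw [PpartPre]
    split_ifs
    · exact mul_le_of_le_one_right hmix (BpredPre_le_one y _ _ _)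
    · exact hmix
  have hstay : ∑ j ∈ Finset.range (n + 3), P ((j : ℤ) - 1) = swPre D p y x (n + 1) := by
    rw [Finset.sum_range_succ, hP, PpartPre_eq_zero_of_ge y x p (by push_cast; omega), add_zero]
    rfl
  have hswitch : ∑ j ∈ Finset.range (n + 3), P ((j : ℤ) - 1 - 1) = swPre D p y x (n + 1) := by
    rw [Finset.sum_range_succ', hP, PpartPre_eq_zero_of_lt y x p (n + 1) (by omega), add_zero]
    simp only [Nat.cast_add_one, add_sub_cancel_right]
    rfl
  calc swPre D p y x (n + 2)
      ≤ ∑ j ∈ Finset.range (n + 3),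
          (p (n + 1) * P ((j : ℤ) - 1) + (1 - p (n + 1)) * P ((j : ℤ) - 1 - 1)) :=
        Finset.sum_le_sum fun j _ => hterm _
    _ = swPre D p y x (n + 1) := by
        rw [Finset.sum_add_distrib, ← Finset.mul_sum, ← Finset.mul_sum, hstay, hswitch]
        ring

lemma swPre_le_one (hp : ∀ n, p n ∈ Set.Icc (0 : ℝ) 1) (n : ℕ) : swPre D p y x n ≤ 1 := by
  induction n using Nat.twoStepInduction with
  | zero => simp [swPre, PpartPre]
  | one => exact swPre_one_le_one y x (hp 0)
  | more n _ ih => exact (swPre_succ_le y x hp n).trans ih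

lemma neg_log_swPre_div_nonneg (hp : ∀ n, p n ∈ Set.Ioo (0 : ℝ) 1) {n : ℕ} (hn : 0 < n) :
    0 ≤ -Real.log (swPre D p y x n) / n :=
  div_nonneg (neg_nonneg.2 (Real.log_nonpos (swPre_pos y x hp hn).le
    (swPre_le_one y x (fun m => Set.Ioo_subset_Icc_self (hp m)) n))) n.cast_nonneg

lemma neg_log_PpartPre_succ_sub_le (hp : ∀ n, p n ∈ Set.Ioo (0 : ℝ) 1) {n k : ℕ} (hk : k < n) :
    -Real.log (PpartPre D p y x (n + 1) k) - -Real.log (PpartPre D p y x n k) ≤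
      -Real.log (p n) - Real.log (BpredPre D y (pref x n) (x n) (k + 1)) := by
  have hp_pos := (hp n).1
  have hP_pos := PpartPre_pos y x hp hk
  have hB_pos := BpredPre_pos y (pref x n) (x n) (k + 1)
  have hlog := Real.log_le_log (by positivity)
    (mul_PpartPre_mul_BpredPre_le y x (fun n => Set.Ioo_subset_Icc_self (hp n)) hk)
  rw [Real.log_mul (by positivity) (by positivity), Real.log_mul (by positivity) (by positivity)]
    at hlog
  linarith

lemma eventually_neg_log_swPre_div_lt (hp : ∀ n, p n ∈ Set.Ioo (0 : ℝ) 1)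
    (hp_log : Tendsto (fun n : ℕ => (∑ i ∈ Finset.range n, Real.log (p i)) / n) atTop (𝓝 0))
    {f : ℕ → ℝ} {h b : ℝ} {k : ℕ}
    (hf : Tendsto (fun n : ℕ => (∑ i ∈ Finset.range n, f i) / n) atTop (𝓝 h))
    (hB : ∀ δ > 0, ∀ᶠ n in atTop,
      -Real.log (BpredPre D y (pref x n) (x n) (k + 1)) ≤ f (n - k) + δ) (hb : h < b) :
    ∀ᶠ n : ℕ in atTop, -Real.log (swPre D p y x n) / n < b := by
  obtain ⟨c, hhc, hcb⟩ := exists_between hb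
  set S : ℕ → ℝ := fun n => ∑ i ∈ Finset.range n, f i
  set bound : ℕ → ℝ := fun n =>
    -∑ i ∈ Finset.range n, Real.log (p i) + S (n - k) + n * (c - h)
  have hbound : Tendsto (fun n : ℕ => bound n / n) atTop (𝓝 c) := by
    have hlim := (hp_log.neg.add (tendsto_comp_sub_div_of_tendsto_div hf k)).add
      (tendsto_const_nhds (x := c - h))
    rw [neg_zero, zero_add, add_sub_cancel] at hlim
    refine hlim.congr' ?_
    filter_upwards [eventually_ne_atTop 0] with n hn
    rw [add_div, add_div, neg_div, mul_div_cancel_left₀ _ (Nat.cast_ne_zero.2 hn)]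
  have hstep : ∀ᶠ n in atTop, -Real.log (PpartPre D p y x (n + 1) k) -
      -Real.log (PpartPre D p y x n k) ≤ bound (n + 1) - bound n := by
    filter_upwards [hB (c - h) (sub_pos.2 hhc), eventually_gt_atTop k] with n hn hk
    have hS : S (n + 1 - k) = S (n - k) + f (n - k) := by
      rw [Nat.sub_add_comm hk.le]
      exact Finset.sum_range_succ f (n - k)
    simp only [bound, hS, Finset.sum_range_succ, Nat.cast_add_one]
    linarith [neg_log_PpartPre_succ_sub_le y x hp hk]
  filter_upwards [eventually_div_lt_of_sub_le_sub
    (a := fun n => -Real.log (PpartPre D p y x n k)) hstep hbound hcb, eventually_gt_atTop k]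
    with n hn hk
  refine lt_of_le_of_lt ?_ hn
  gcongr
  · exact PpartPre_pos y x hp hk
  · exact PpartPre_le_swPre y x (fun n => Set.Ioo_subset_Icc_self (hp n)) hk

end SwitchDistribution

section EmpiricalFrequencies

variable {D : ℕ} {x : ℕ → Fin D} {q : List (Fin D) → ℝ}

lemma tendsto_occCount_div_occCount
    (hfreq : ∀ w, Tendsto (fun n : ℕ => (occCount w x n : ℝ) / n) atTop (𝓝 (q w)))
    {u : List (Fin D)} (hu : q u ≠ 0) (w : List (Fin D)) (k : ℕ) (c : ℝ) :
    Tendsto (fun n : ℕ => (occCount w x (n - k) : ℝ) / (occCount u x n + c)) atTop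
      (𝓝 (q w / q u)) := by
  have hden : Tendsto (fun n : ℕ => ((occCount u x n : ℝ) + c) / n) atTop (𝓝 (q u)) := by
    simpa only [add_div, add_zero] using
      (hfreq u).add (tendsto_const_div_atTop_nhds_zero_nat c)
  refine ((tendsto_comp_sub_div_of_tendsto_div (hfreq w) k).div hden hu).congr' ?_
  filter_upwards [eventually_ne_atTop 0] with n hn
  exact div_div_div_cancel_right₀ (Nat.cast_ne_zero.2 hn) _ _

lemma eventually_neg_log_BpredPre_le (y : List (Fin D)) (hq_pos : ∀ i k, 0 < q (block x i k))
    (hfreq : ∀ w, Tendsto (fun n : ℕ => (occCount w x n : ℝ) / n) atTop (𝓝 (q w))) (k : ℕ)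
    {δ : ℝ} (hδ : 0 < δ) :
    ∀ᶠ n in atTop, -Real.log (BpredPre D y (pref x n) (x n) (k + 1)) ≤
      Real.log (q (block x (n - k) k)) - Real.log (q (block x (n - k) (k + 1))) + δ := by
  have hratio : ∀ᶠ n in atTop, ∀ w ∈ {w : List (Fin D) | w.length = k + 1},
      0 < q w → 0 < q w.dropLast → q w / q w.dropLast * Real.exp (-δ) <
        (occCount w x (n - k) : ℝ) / (occCount w.dropLast x n + (y.length + 1)) := by
    refine (eventually_all_finite (List.finite_length_eq (Fin D) (k + 1))).2 fun w _ => ?_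
    simp only [eventually_imp_distrib_left]
    intro hw hw'
    exact (tendsto_occCount_div_occCount hfreq hw'.ne' w k _).eventually_const_lt
      (mul_lt_of_lt_one_right (div_pos hw hw') (Real.exp_lt_one_iff.2 (neg_lt_zero.2 hδ)))
  filter_upwards [hratio, eventually_gt_atTop k] with n hn hk
  have hq := hq_pos (n - k) k
  have hq' := hq_pos (n - k) (k + 1)
  have hdropLast : (block x (n - k) (k + 1)).dropLast = block x (n - k) k := by
    rw [block_succ, List.dropLast_concat]
  have hlt := hn (block x (n - k) (k + 1)) (length_block ..) hq'
  rw [hdropLast] at hlt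
  have hlog := Real.log_le_log (by positivity)
    ((hlt hq).le.trans (occCount_div_le_BpredPre y x hk))
  rw [Real.log_mul (by positivity) (by positivity), Real.log_div hq'.ne' hq.ne', Real.log_exp]
    at hlog
  linarith

end EmpiricalFrequencies

section ErgodicSource

variable {D : ℕ}

/-- The event that the sample path starts with the word `w`. -/
def wordCyl (w : List (Fin D)) : Set (Omega D) :=
  {ω | pref (path D ω) w.length = w}

/-- The probability `Q(w)` that the sample path starts with the word `w`. Unlike `Qstr`, it takes
the word itself rather than a sequence extending it, so that it can be compared with `occCount`. -/
noncomputable def wordProb (Q : Measure (Omega D)) (w : List (Fin D)) : ℝ :=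
  Q.real (wordCyl w)

/-- The conditional information `-log Q(X_{k+1} | X_1^k)`. -/
noncomputable def condInfo (Q : Measure (Omega D)) (k : ℕ) (ω : Omega D) : ℝ :=
  Real.log (wordProb Q (pref (path D ω) k)) - Real.log (wordProb Q (pref (path D ω) (k + 1)))

lemma Qstr_eq_wordProb (Q : Measure (Omega D)) (x : ℕ → Fin D) (n : ℕ) :
    Qstr D Q x n = wordProb Q (pref x n) := by
  have hcyl : cylSet D x n = wordCyl (pref x n) := by
    ext ω
    simp [cylSet, wordCyl, pref, path]
  rw [Qstr, hcyl, wordProb, Measure.real]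

lemma iterate_shiftT_apply (i : ℕ) (ω : Omega D) (j : ℤ) :
    (shiftT D)^[i] ω j = ω (i + j) := by
  induction i generalizing ω with
  | zero => simp
  | succ i ih =>
    rw [Function.iterate_succ_apply, ih, shiftT]
    push_cast
    ring_nf

lemma pref_path_iterate_shiftT (i k : ℕ) (ω : Omega D) :
    pref (path D ((shiftT D)^[i] ω)) k = block (path D ω) i k := by
  simp [block, pref, path, iterate_shiftT_apply, add_assoc]

lemma pref_eq_ofFn (x : ℕ → Fin D) (n : ℕ) : pref x n = List.ofFn fun i : Fin n => x i :=
  List.ext_getElem (by simp [pref]) (by simp [pref])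

lemma measurable_path_restrict (k : ℕ) :
    Measurable fun (ω : Omega D) (i : Fin k) => path D ω i :=
  measurable_pi_lambda _ fun _ => measurable_pi_apply _

lemma measurableSet_wordCyl (w : List (Fin D)) : MeasurableSet (wordCyl w) := by
  simp only [wordCyl, pref_eq_ofFn]
  exact measurable_path_restrict w.length
    (Set.toFinite {v : Fin w.length → Fin D | List.ofFn v = w}).measurableSet

lemma integrable_comp_pref_path (Q : Measure (Omega D)) [IsFiniteMeasure Q]
    (φ : List (Fin D) → ℝ) (k : ℕ) : Integrable (fun ω => φ (pref (path D ω) k)) Q := by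
  simp only [pref_eq_ofFn]
  exact (Integrable.of_finite (f := fun v : Fin k → Fin D => φ (List.ofFn v))).comp_measurable
    (measurable_path_restrict k)

lemma integrable_condInfo (Q : Measure (Omega D)) [IsFiniteMeasure Q] (k : ℕ) :
    Integrable (condInfo Q k) Q :=
  (integrable_comp_pref_path Q (fun w => Real.log (wordProb Q w)) k).sub
    (integrable_comp_pref_path Q (fun w => Real.log (wordProb Q w)) (k + 1))

lemma integral_condInfo (Q : Measure (Omega D)) [IsFiniteMeasure Q] (k : ℕ) :
    ∫ ω, condInfo Q k ω ∂Q = ∫ ω, -Real.log (Qstr D Q (path D ω) (k + 1)) ∂Q -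
      ∫ ω, -Real.log (Qstr D Q (path D ω) k) ∂Q := by
  simp only [Qstr_eq_wordProb, condInfo, integral_neg]
  rw [integral_sub (integrable_comp_pref_path Q (fun w => Real.log (wordProb Q w)) k)
    (integrable_comp_pref_path Q (fun w => Real.log (wordProb Q w)) (k + 1))]
  ring

lemma birkhoffSum_indicator_wordCyl (w : List (Fin D)) (n : ℕ) (ω : Omega D) :
    birkhoffSum (shiftT D) ((wordCyl w).indicator (1 : Omega D → ℝ)) n ω =
      occCount w (path D ω) n := by
  simp only [birkhoffSum, occCount, Nat.count_eq_card_filter_range, Finset.natCast_card_filter,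
    Set.indicator_apply, wordCyl, Set.mem_ofPred_eq, pref_path_iterate_shiftT, Pi.one_apply]

lemma birkhoffSum_condInfo (Q : Measure (Omega D)) (k n : ℕ) (ω : Omega D) :
    birkhoffSum (shiftT D) (condInfo Q k) n ω =
      ∑ i ∈ Finset.range n, (Real.log (wordProb Q (block (path D ω) i k)) -
        Real.log (wordProb Q (block (path D ω) i (k + 1)))) := by
  simp only [birkhoffSum, condInfo, pref_path_iterate_shiftT]

variable {Q : Measure (Omega D)}

lemma ae_wordProb_block_pos [IsFiniteMeasure Q] (hT : MeasurePreserving (shiftT D) Q Q) :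
    ∀ᵐ ω ∂Q, ∀ i k, 0 < wordProb Q (block (path D ω) i k) := by
  have hnull (w : List (Fin D)) : ∀ᵐ ω ∂Q, ω ∈ wordCyl w → 0 < wordProb Q w := by
    by_cases hw : Q (wordCyl w) = 0
    · filter_upwards [measure_eq_zero_iff_ae_notMem.1 hw] with ω hω hmem using absurd hmem hω
    · exact ae_of_all _ fun _ _ => ENNReal.toReal_pos hw (measure_ne_top Q _)
  have hpref : ∀ᵐ ω ∂Q, ∀ k, 0 < wordProb Q (pref (path D ω) k) := by
    filter_upwards [ae_all_iff.2 hnull] with ω hω k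
    exact hω _ (by rw [wordCyl, Set.mem_ofPred_eq, length_pref])
  refine ae_all_iff.2 fun i => ?_
  filter_upwards [(hT.iterate i).quasiMeasurePreserving.ae hpref] with ω hω k
  simpa only [pref_path_iterate_shiftT] using hω k

variable [IsProbabilityMeasure Q]

lemma ae_tendsto_occCount_div (hT : Ergodic (shiftT D) Q) :
    ∀ᵐ ω ∂Q, ∀ w, Tendsto (fun n : ℕ => (occCount w (path D ω) n : ℝ) / n) atTop
      (𝓝 (wordProb Q w)) := by
  refine ae_all_iff.2 fun w => ?_
  have hint : Integrable ((wordCyl w).indicator (1 : Omega D → ℝ)) Q :=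
    (integrable_const 1).indicator (measurableSet_wordCyl w)
  filter_upwards [ae_tendsto_birkhoffAverage hT hint] with ω hω
  simpa only [integral_indicator_one (measurableSet_wordCyl w), wordProb, birkhoffAverage,
    smul_eq_mul, birkhoffSum_indicator_wordCyl, inv_mul_eq_div] using hω

lemma ae_tendsto_sum_condInfo_div (hT : Ergodic (shiftT D) Q) (k : ℕ) :
    ∀ᵐ ω ∂Q, Tendsto (fun n : ℕ =>
      (∑ i ∈ Finset.range n, (Real.log (wordProb Q (block (path D ω) i k)) -
        Real.log (wordProb Q (block (path D ω) i (k + 1))))) / n) atTop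
      (𝓝 (∫ ω, condInfo Q k ω ∂Q)) := by
  filter_upwards [ae_tendsto_birkhoffAverage hT (integrable_condInfo Q k)] with ω hω
  simpa only [birkhoffAverage, smul_eq_mul, birkhoffSum_condInfo, inv_mul_eq_div] using hω

lemma ae_eventually_neg_log_swPre_div_lt {p : ℕ → ℝ} (y : List (Fin D))
    (hp : ∀ n, p n ∈ Set.Ioo (0 : ℝ) 1)
    (hp_log : Tendsto (fun n : ℕ => (∑ i ∈ Finset.range n, Real.log (p i)) / n) atTop (𝓝 0))
    (hT : Ergodic (shiftT D) Q) :
    ∀ᵐ ω ∂Q, ∀ k, ∀ b > ∫ ω, condInfo Q k ω ∂Q,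
      ∀ᶠ n : ℕ in atTop, -Real.log (swPre D p y (path D ω) n) / n < b := by
  filter_upwards [ae_wordProb_block_pos hT.toMeasurePreserving, ae_tendsto_occCount_div hT,
    ae_all_iff.2 (ae_tendsto_sum_condInfo_div hT)] with ω hpos hfreq hinfo k b hb
  exact eventually_neg_log_swPre_div_lt y (path D ω) hp hp_log (hinfo k)
    (fun _ => eventually_neg_log_BpredPre_le y hpos hfreq k) hb

end ErgodicSource

theorem preadapted_switch_strongly_universal_general {D : ℕ} (y : List (Fin D)) {p : ℕ → ℝ}
    (hp : ∀ n, p n ∈ Set.Ioo (0 : ℝ) 1)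
    (hp_log : Tendsto (fun n : ℕ => (∑ i ∈ Finset.range n, Real.log (p i)) / n) atTop (𝓝 0))
    {Q : Measure (Omega D)} [IsProbabilityMeasure Q] (hQerg : Ergodic (shiftT D) Q) {hQ : ℝ}
    (hent : Tendsto
      (fun n : ℕ => (∫ ω, -Real.log (Qstr D Q (path D ω) n) ∂Q) / n) atTop (𝓝 hQ)) :
    ∀ᵐ ω ∂Q,
      Filter.limsup (fun n : ℕ => -Real.log (swPre D p y (path D ω) n) / n) atTop ≤ hQ := by
  filter_upwards [ae_eventually_neg_log_swPre_div_lt y hp hp_log hQerg] with ω hω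
  refine le_of_forall_gt_imp_ge_of_dense fun b hb => ?_
  obtain ⟨k, hk⟩ := exists_sub_lt_of_tendsto_div hent hb
  rw [← integral_condInfo] at hk
  have hcobdd : IsCoboundedUnder (· ≤ ·) atTop
      fun n : ℕ => -Real.log (swPre D p y (path D ω) n) / n :=
    isCoboundedUnder_le_of_eventually_le atTop <| by
      filter_upwards [eventually_gt_atTop 0] with n hn
      exact neg_log_swPre_div_nonneg y (path D ω) hp hn
  exact limsup_le_of_le hcobdd ((hω k b hk).mono fun _ => le_of_lt)

/-- The preadapted switch distribution is strongly universal: for every stationary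
ergodic probability measure `Q` on `Ω = {1,...,D}^ℤ`, `Q`-almost surely
`limsup_{n→∞} (1/n)·(−log P(X_1^n)) ≤ h_Q`, where `h_Q` is the entropy rate of `Q`. -/
theorem preadapted_switch_strongly_universal
    (D : ℕ) (hD : 2 ≤ D) (y : List (Fin D))
    (p : ℕ → ℝ) (hp : ∀ n, p n ∈ Set.Ioo (0 : ℝ) 1)
    (hprod : ∃ L, 0 < L ∧ Tendsto (fun N : ℕ => ∏ i ∈ Finset.range N, p i) atTop (𝓝 L))
    (Q : Measure (Omega D)) [IsProbabilityMeasure Q]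
    (hQerg : Ergodic (shiftT D) Q)
    (hQ : ℝ)
    (hent : Tendsto
      (fun n : ℕ => (∫ ω, -Real.log (Qstr D Q (path D ω) n) ∂Q) / n) atTop (𝓝 hQ)) :
    ∀ᵐ ω ∂Q,
      Filter.limsup (fun n : ℕ => -Real.log (swPre D p y (path D ω) n) / n) atTop
        ≤ hQ := by
  obtain ⟨L, hL, hprod⟩ := hprod
  exact preadapted_switch_strongly_universal_general y hp
    (tendsto_sum_log_div_of_tendsto_prod (fun n => (hp n).1.ne') hL.ne' hprod) hQerg hent
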